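/- Let n ≥ 1 and let Σ ∈ ℝ^{4n×4n} be symmetric with 2n×2n blocks Σ = [[σ_AA, σ_AA'],[σ_A'A, σ_A'A']], satisfying: (i) Σ ⪰ ±(i/2)Ω; (ii) both Σ − (i/2)Ω and Σ + (i/2)Ω have rank exactly 2n; (iii) both σ_A'A' − (i/2)Δ and σ_A'A' + (i/2)Δ are invertible. Let K, α ∈ ℝ^{2n×2n} with α symmetric, such that Σ' := [[K·σ_AA·Kᵀ + α, K·σ_AA'],[σ_A'A·Kᵀ, σ_A'A']] satisfies Σ' ⪰ ±(i/2)Ω, and assume α is extremal in the sense that the only symmetric positive semidefinite δ ∈ ℝ^{2n×2n} with α − δ ⪰ ±(i/2)(Δ − K·Δ·Kᵀ) is δ = 0. Then the complex matrix Σ' + (i/2)Ω has rank at most 3n (equivalently, Σ' has at least n symplectic eigenvalues equal to 1/2). -/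

import Mathlib

/-!
Put `D = σ_A'A' + (i/2)Δ`, which is positive definite. Since `Σ + (i/2)Ω` has rank `2n = rank D`,
the Schur complement of `D` in it vanishes (rank is additive over the block `LDU` factorization:
`rank_fromBlocks_schur`), that is `σ_AA + (i/2)Δ = σ_AA' D⁻¹ σ_A'A`. Substituting this in
`Σ' + (i/2)Ω`, the Schur complement of the same block `D` there is `M = α + (i/2)(Δ - KΔKᵀ)`
(`schur_channel`). Hence `M` is positive semidefinite and `rank (Σ' + (i/2)Ω) = 2n + rank M`.

It remains to see that extremality forces `rank M ≤ n` (`rank_le_of_extremal`). If `rank M > n`, the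
ranges of `M` and `Mᵀ = conj M` in `ℂ^{2n}` meet nontrivially. The intersection is stable under
complex conjugation, hence contains a nonzero real vector `v`. A vector in the range of a positive
semidefinite matrix can be split off: `M ⪰ ε v vᵀ` for some `ε > 0` (`exists_sub_vecMulVec`), and
transposing gives `conj M ⪰ ε v vᵀ`. So `δ = ε v vᵀ` contradicts extremality.
-/

open Matrix ComplexOrder

/-- The standard `2n × 2n` symplectic form: block-diagonal with `n` copies of `[[0,1],[-1,0]]`. -/
def symplJ (n : ℕ) : Matrix (Fin (2*n)) (Fin (2*n)) ℝ :=
  Matrix.of fun i j =>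
    if (i : ℕ) + 1 = (j : ℕ) ∧ (i : ℕ) % 2 = 0 then 1
    else if (j : ℕ) + 1 = (i : ℕ) ∧ (j : ℕ) % 2 = 0 then -1 else 0

/-- `Ω = Δ ⊕ Δ`, the `4n × 4n` symplectic form. -/
def symplOmega (n : ℕ) : Matrix (Fin (2*n) ⊕ Fin (2*n)) (Fin (2*n) ⊕ Fin (2*n)) ℝ :=
  Matrix.fromBlocks (symplJ n) 0 0 (symplJ n)

/-- View a real matrix as a complex matrix. -/
def toC {m : Type*} (M : Matrix m m ℝ) : Matrix m m ℂ := M.map Complex.ofReal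

/-- `M ⪰ ± (i/2) J₀` : both `M - (i/2) J₀` and `M + (i/2) J₀` are positive semidefinite
as complex matrices. -/
def GeI {m : Type*} [Fintype m] (M J₀ : Matrix m m ℝ) : Prop :=
  (toC M - (Complex.I / 2) • toC J₀).PosSemidef ∧
  (toC M + (Complex.I / 2) • toC J₀).PosSemidef

/-! ### Ranks of block matrices and Schur complements -/

lemma rank_fromBlocks_diag {l m : Type*} [Fintype l] [Fintype m]
    (S : Matrix l l ℂ) (D : Matrix m m ℂ) :
    (fromBlocks S 0 0 D).rank = S.rank + D.rank := by
  let e := LinearEquiv.sumArrowLequivProdArrow l m ℂ ℂ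
  have h : (fromBlocks S 0 0 D).mulVecLin =
      e.symm.toLinearMap ∘ₗ (S.mulVecLin.prodMap D.mulVecLin) ∘ₗ e.toLinearMap := by
    ext x i
    rcases i with i | i <;>
      simp [e, fromBlocks_mulVec, Function.comp_def, LinearEquiv.sumArrowLequivProdArrow,
        Equiv.sumArrowEquivProdArrow]
  have hr : (fromBlocks S 0 0 D).mulVecLin.range =
      (S.mulVecLin.range.prod D.mulVecLin.range).map e.symm.toLinearMap := by
    rw [h, LinearMap.range_comp, LinearMap.range_comp_of_range_eq_top _ (LinearEquiv.range e),
      LinearMap.range_prodMap]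
  unfold Matrix.rank
  have hp : S.mulVecLin.range.prod D.mulVecLin.range =
      (S.mulVecLin.range.subtype.prodMap D.mulVecLin.range.subtype).range := by
    rw [LinearMap.range_prodMap, Submodule.range_subtype, Submodule.range_subtype]
  rw [hr, LinearEquiv.finrank_map_eq e.symm, hp, LinearMap.finrank_range_of_inj, Module.finrank_prod]
  exact Function.Injective.prodMap Subtype.val_injective Subtype.val_injective

lemma rank_fromBlocks_schur {l m : Type*} [Fintype l] [Fintype m] [DecidableEq l] [DecidableEq m]
    (A : Matrix l l ℂ) (B : Matrix l m ℂ) (C : Matrix m l ℂ) (D : Matrix m m ℂ) (hD : IsUnit D) :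
    (fromBlocks A B C D).rank = (A - B * D⁻¹ * C).rank + Fintype.card m := by
  have := hD.invertible
  rw [fromBlocks_eq_of_invertible₂₂, rank_mul_eq_left_of_isUnit_det,
    rank_mul_eq_right_of_isUnit_det, rank_fromBlocks_diag, rank_of_isUnit D hD, invOf_eq_nonsing_inv]
  · simp
  · simp

lemma eq_zero_of_rank_eq_zero {l : Type*} [Fintype l] [DecidableEq l]
    (A : Matrix l l ℂ) (h : A.rank = 0) : A = 0 := by
  unfold Matrix.rank at h
  rw [Submodule.finrank_eq_zero, LinearMap.range_eq_bot] at h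
  exact Matrix.ext_of_mulVec_single fun i => by
    rw [← mulVecLin_apply, h, LinearMap.zero_apply, zero_mulVec]

/-! ### Real matrices viewed as complex ones -/

section toC
variable {m : Type*}

lemma toC_mul [Fintype m] (A B : Matrix m m ℝ) : toC (A * B) = toC A * toC B :=
  Matrix.map_mul (f := Complex.ofRealHom)

lemma toC_add (A B : Matrix m m ℝ) : toC (A + B) = toC A + toC B := by
  ext; simp [toC]

lemma toC_sub (A B : Matrix m m ℝ) : toC (A - B) = toC A - toC B := by
  ext; simp [toC]

lemma toC_transpose (A : Matrix m m ℝ) : toC Aᵀ = (toC A)ᴴ := by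
  ext; simp [toC]

end toC

lemma toC_block (n : ℕ) (a b c d : Matrix (Fin (2*n)) (Fin (2*n)) ℝ) (s : ℂ) :
    toC (fromBlocks a b c d) + s • toC (symplOmega n) =
      fromBlocks (toC a + s • toC (symplJ n)) (toC b) (toC c) (toC d + s • toC (symplJ n)) := by
  ext i j
  rcases i with i | i <;> rcases j with j | j <;> simp [toC, symplOmega]

/-! ### The Schur complement of the output -/

/-- If `D = d + sΔ` is invertible and accounts for the whole rank of `Σ + sΩ`, the Schur complement
of `D` in `Σ' + sΩ` does not involve `Σ`. -/
lemma schur_channel (n : ℕ) (a b c d K α : Matrix (Fin (2*n)) (Fin (2*n)) ℝ) (s : ℂ)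
    (hD : IsUnit (toC d + s • toC (symplJ n)))
    (hrank : (toC (fromBlocks a b c d) + s • toC (symplOmega n)).rank = 2*n) :
    (toC (K * a * Kᵀ + α) + s • toC (symplJ n)) -
        toC (K * b) * (toC d + s • toC (symplJ n))⁻¹ * toC (c * Kᵀ) =
      toC α + s • toC (symplJ n - K * symplJ n * Kᵀ) := by
  rw [toC_block, rank_fromBlocks_schur _ _ _ _ hD, Fintype.card_fin] at hrank
  have h0 := eq_zero_of_rank_eq_zero _ (Nat.add_eq_right.mp hrank)
  have h1 : toC b * (toC d + s • toC (symplJ n))⁻¹ * toC c = toC a + s • toC (symplJ n) :=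
    (sub_eq_zero.mp h0).symm
  have h2 : toC (K * b) * (toC d + s • toC (symplJ n))⁻¹ * toC (c * Kᵀ) =
      toC K * (toC a + s • toC (symplJ n)) * toC Kᵀ := by
    rw [← h1, toC_mul, toC_mul]
    simp only [Matrix.mul_assoc]
  rw [h2]
  simp only [toC_add, toC_sub, toC_mul, Matrix.mul_add, Matrix.add_mul, smul_sub,
    Matrix.mul_smul, Matrix.smul_mul]
  abel

lemma channel_posSemidef (n : ℕ) (a b c d K α : Matrix (Fin (2*n)) (Fin (2*n)) ℝ) (s : ℂ)
    (hbc : c = bᵀ)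
    (hD : IsUnit (toC d + s • toC (symplJ n)))
    (hrank : (toC (fromBlocks a b c d) + s • toC (symplOmega n)).rank = 2*n)
    (hpsd : (toC (fromBlocks (K * a * Kᵀ + α) (K * b) (c * Kᵀ) d)
      + s • toC (symplOmega n)).PosSemidef) :
    (toC α + s • toC (symplJ n - K * symplJ n * Kᵀ)).PosSemidef := by
  rw [← schur_channel n a b c d K α s hD hrank]
  rw [toC_block] at hpsd
  have hDpsd : (toC d + s • toC (symplJ n)).PosSemidef := by
    simpa using! hpsd.submatrix Sum.inr
  have hDpos := hDpsd.posDef_iff_isUnit.mpr hD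
  have := hD.invertible
  have hc : toC (c * Kᵀ) = (toC (K * b))ᴴ := by
    rw [← toC_transpose, transpose_mul, hbc]
  rw [hc] at hpsd ⊢
  exact (PosDef.fromBlocks₂₂ _ _ hDpos).mp hpsd

/-! ### Extremality bounds the rank -/

/-- A vector in the range of a positive semidefinite matrix spans a rank-one
summand that can be subtracted with a positive coefficient. -/
lemma exists_sub_vecMulVec {m : Type*} [Fintype m] [DecidableEq m] {M : Matrix m m ℂ}
    (hM : M.PosSemidef) (w : m → ℂ) :
    ∃ ε : ℝ, 0 < ε ∧ (M - (ε : ℂ) • vecMulVec (M *ᵥ w) (star (M *ᵥ w))).PosSemidef := by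
  obtain ⟨c, hc, hcw⟩ : ∃ c : ℝ, 0 ≤ c ∧ star w ⬝ᵥ (M *ᵥ w) = (c : ℂ) := by
    have h := hM.dotProduct_mulVec_nonneg w
    rw [Complex.nonneg_iff] at h
    exact ⟨_, h.1, Complex.ext (by simp) (by simp [← h.2])⟩
  set v := M *ᵥ w with hv
  have hvs : star w ᵥ* M = star v := by
    rw [hv, star_mulVec, hM.isHermitian.eq]
  -- With `P = 1 - s w v*`, one has `P* M P = M - (2s - s²c) v v*`, where `c = w* M w`;
  -- for `s = 1/(1+c)` one has `2s - s²c ≥ s`, so `ε = s` works.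
  set s : ℝ := 1 / (1 + c) with hs
  have hspos : 0 < s := by positivity
  have hsc : 0 ≤ s - s ^ 2 * c := by
    have : s * (1 + c) = 1 := by rw [hs]; field_simp
    have : s - s ^ 2 * c = s ^ 2 := by linear_combination (-s) * this
    rw [this]; positivity
  refine ⟨s, hspos, ?_⟩
  have h1 := hM.conjTranspose_mul_mul_same (1 - (s : ℂ) • vecMulVec w (star v))
  have h2 := (posSemidef_vecMulVec_self_star v).smul
    (a := ((s - s ^ 2 * c : ℝ) : ℂ)) (by exact_mod_cast hsc)
  have h3 := h1.add h2
  convert h3 using 1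
  have e1 : (vecMulVec w (star v))ᴴ = vecMulVec v (star w) := by
    rw [conjTranspose_vecMulVec, star_star]
  have e2 : M * vecMulVec w (star v) = vecMulVec v (star v) := by
    rw [mul_vecMulVec, hv]
  have e3 : vecMulVec v (star w) * M = vecMulVec v (star v) := by
    rw [vecMulVec_mul, hvs]
  have e4 : vecMulVec v (star v) * vecMulVec w (star v) = (c : ℂ) • vecMulVec v (star v) := by
    have : star v ⬝ᵥ w = (c : ℂ) := by rw [← hvs, ← dotProduct_mulVec, ← hv, hcw]
    rw [vecMulVec_mul_vecMulVec, this]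
    ext i j
    simp [vecMulVec_apply]
    ring
  rw [conjTranspose_sub, conjTranspose_one, conjTranspose_smul, e1]
  simp only [Matrix.sub_mul, Matrix.mul_sub, Matrix.one_mul, Matrix.mul_one, Matrix.smul_mul,
    Matrix.mul_smul, e2, e3, e4]
  ext i j
  simp
  ring

/-- For extremal `α`, the range of `α + (i/2)Y` contains no nonzero real vector. The hypothesis `hT`
turns a lower bound on `α + (i/2)Y` into one on `α - (i/2)Y`. -/
lemma real_eq_zero_of_extremal {m : Type*} [Fintype m] [DecidableEq m] {α Y : Matrix m m ℝ}
    (hM : (toC α + (Complex.I / 2) • toC Y).PosSemidef)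
    (hT : (toC α + (Complex.I / 2) • toC Y)ᵀ = toC α - (Complex.I / 2) • toC Y)
    (hextreme : ∀ δ : Matrix m m ℝ, δ.PosSemidef → GeI (α - δ) Y → δ = 0)
    (x : m → ℝ) (w : m → ℂ)
    (hw : (toC α + (Complex.I / 2) • toC Y) *ᵥ w = fun i => (x i : ℂ)) : x = 0 := by
  obtain ⟨ε, hε, hp⟩ := exists_sub_vecMulVec hM w
  rw [hw] at hp
  have hV : (ε : ℂ) • vecMulVec (fun i => (x i : ℂ)) (star fun i => (x i : ℂ)) =
      toC (ε • vecMulVec x x) := by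
    ext i j
    simp [toC, vecMulVec_apply]
  rw [hV] at hp
  have hVT : (toC (ε • vecMulVec x x))ᵀ = toC (ε • vecMulVec x x) := by
    ext i j
    simp [toC, vecMulVec_apply, mul_comm]
  have hδ := hextreme (ε • vecMulVec x x) (by
    have := (posSemidef_vecMulVec_self_star x).smul hε.le
    simpa using this) ⟨by
      have := hp.transpose
      rw [transpose_sub, hT, hVT] at this
      rwa [toC_sub, sub_right_comm], by
      rwa [toC_sub, sub_add_eq_add_sub]⟩
  ext i
  have := congrFun (congrFun hδ i) i
  simpa [vecMulVec_apply, hε.ne'] using this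

lemma rank_le_of_extremal {n : ℕ} {α Y : Matrix (Fin (2*n)) (Fin (2*n)) ℝ}
    (hM : (toC α + (Complex.I / 2) • toC Y).PosSemidef)
    (hextreme : ∀ δ : Matrix (Fin (2*n)) (Fin (2*n)) ℝ, δ.PosSemidef → GeI (α - δ) Y → δ = 0) :
    (toC α + (Complex.I / 2) • toC Y).rank ≤ n := by
  have hT : (toC α + (Complex.I / 2) • toC Y)ᵀ = toC α - (Complex.I / 2) • toC Y := by
    ext i j
    have := congrFun (congrFun hM.isHermitian.eq j) i
    rw [transpose_apply, ← this]
    simp [toC, neg_div, sub_eq_add_neg]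
  have hreal := real_eq_zero_of_extremal hM hT hextreme
  set M := toC α + (Complex.I / 2) • toC Y with hMdef
  by_contra! hlt
  have hnd : ¬ Disjoint M.mulVecLin.range Mᵀ.mulVecLin.range := fun hd => by
    have h1 := Submodule.finrank_add_finrank_le_of_disjoint hd
    have h2 : Module.finrank ℂ Mᵀ.mulVecLin.range = M.rank := rank_transpose M
    have h3 : Module.finrank ℂ M.mulVecLin.range = M.rank := rfl
    rw [h2, h3, Module.finrank_fin_fun] at h1
    omega
  apply hnd
  rw [Submodule.disjoint_def]
  -- Since `conj (Mᵀ) = M`, conjugating `v = Mᵀ u` puts `conj v` in the range of `M`; hence so are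
  -- the real and imaginary parts of `v`.
  rintro v ⟨w, hw⟩ ⟨w', hw'⟩
  rw [mulVecLin_apply] at hw hw'
  have hsv : M *ᵥ star w' = star v := by
    rw [← hw', star_mulVec, show Mᵀᴴ = Mᴴᵀ from rfl, hM.isHermitian.eq, vecMul_transpose]
  have hre : (fun i => (v i).re) = 0 := by
    refine hreal _ ((1 / 2 : ℂ) • (w + star w')) ?_
    rw [mulVec_smul, mulVec_add, hw, hsv]
    ext i
    simp [Complex.ext_iff]
    ring
  have him : (fun i => (v i).im) = 0 := by
    refine hreal _ ((-Complex.I / 2 : ℂ) • (w - star w')) ?_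
    rw [mulVec_smul, mulVec_sub, hw, hsv]
    ext i
    simp [Complex.ext_iff]
    ring
  ext i
  exact Complex.ext (congrFun hre i) (congrFun him i)

theorem stmt6 (n : ℕ) (hn : 1 ≤ n)
    (σAA σAA' σA'A σA'A' K α : Matrix (Fin (2*n)) (Fin (2*n)) ℝ)
    (hsym : (Matrix.fromBlocks σAA σAA' σA'A σA'A').IsSymm)
    (hSig : GeI (Matrix.fromBlocks σAA σAA' σA'A σA'A') (symplOmega n))
    (hrankm : (toC (Matrix.fromBlocks σAA σAA' σA'A σA'A')
        - (Complex.I / 2) • toC (symplOmega n)).rank = 2*n)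
    (hrankp : (toC (Matrix.fromBlocks σAA σAA' σA'A σA'A')
        + (Complex.I / 2) • toC (symplOmega n)).rank = 2*n)
    (hinvm : IsUnit (toC σA'A' - (Complex.I / 2) • toC (symplJ n)))
    (hinvp : IsUnit (toC σA'A' + (Complex.I / 2) • toC (symplJ n)))
    (hαsym : α.IsSymm)
    (hSig' : GeI (Matrix.fromBlocks (K * σAA * Kᵀ + α) (K * σAA') (σA'A * Kᵀ) σA'A')
      (symplOmega n))
    (hextreme : ∀ δ : Matrix (Fin (2*n)) (Fin (2*n)) ℝ, δ.PosSemidef →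
      GeI (α - δ) (symplJ n - K * symplJ n * Kᵀ) → δ = 0) :
    (toC (Matrix.fromBlocks (K * σAA * Kᵀ + α) (K * σAA') (σA'A * Kᵀ) σA'A')
      + (Complex.I / 2) • toC (symplOmega n)).rank ≤ 3*n := by
  have hbc : σA'A = σAA'ᵀ := (isSymm_fromBlocks_iff.mp hsym).2.1.symm
  have hM := channel_posSemidef n _ _ _ _ K α _ hbc hinvp hrankp hSig'.2
  have hle := rank_le_of_extremal hM hextreme
  rw [toC_block, rank_fromBlocks_schur _ _ _ _ hinvp, schur_channel n _ _ _ _ K α _ hinvp hrankp,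
    Fintype.card_fin]
  omega
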